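/- Repainting lemma: suppose Γ ⊢_k t : L is derivable for a checkers term t, and (Γ',L') ⊑^−_1 (Γ,L). Then there exists a derivation of Γ'' ⊢_{k'} t : L'' such that one of the following holds: (i) (Γ'',L'') ⊑^+_1 (Γ',L') and k' = k; or (ii) (Γ'',L'') = (Γ',L') and |k' − k| = 1. Equivalently: there exists i with 0 ≤ i ≤ 1 such that (Γ'',L'') ⊑^+_i (Γ',L') and |k − k'| ≤ 1 − i. -/

import Mathlib

/-!
The proof is by induction on the term, for all derivations at once. A negative whitening of cost one
is a challenge: a single black arrow is whitened, in a positive position of the environment or in a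
negative position of the type (what the term receives from outside). The term answers either by whitening one further arrow, in a
position that it controls (a positive whitening, at unchanged interaction cost), or by absorbing the
challenge in an application rule whose two colors start or stop matching, which changes the
cost by one.

A variable copies the challenge to the other side of the axiom, and an abstraction only
moves the challenge across the arrow. In an application `t ·_d u` with cut type `M →_c L`, an answer
of `t` may whiten `M`, which is a challenge for `u`; an answer of `u` may whiten `M` again, which is a
challenge for `t`, and so on. Every round removes black arrows from `M`, so the exchange
terminates (`app_exchange`), and it ends with an answer visible from outside or with a change of the
interaction cost. If `t` whitens the color `c` itself, the cost of the application
rule changes by exactly one.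
-/

/-! ### The calculus and its type system -/

set_option autoImplicit false

abbrev Var := ℕ

/-- Colors: white (○) and black (●). -/
inductive Color where
  | white
  | black
deriving DecidableEq

/-- The opposite color. -/
def Color.flip : Color → Color
  | .white => .black
  | .black => .white

/-- Checkers terms (considered modulo α-conversion). -/
inductive Tm where
  | var : Var → Tm
  | lam : Color → Var → Tm → Tm
  | app : Color → Tm → Tm → Tm

/-- Substitution t{u/x} (capture avoided by the modulo-α convention). -/
def Tm.subst (x : Var) (u : Tm) : Tm → Tm
  | .var y => if y = x then u else .var y
  | .lam c y t => if y = x then .lam c y t else .lam c y (Tm.subst x u t)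
  | .app c t s => .app c (Tm.subst x u t) (Tm.subst x u s)

/-- Silent root step: (λ_c x. t) ·_c u ↦τ t{u/x}. -/
inductive RootSilent : Tm → Tm → Prop where
  | mk (c : Color) (x : Var) (t u : Tm) :
      RootSilent (.app c (.lam c x t) u) (Tm.subst x u t)

/-- Interaction root step: (λ_c x. t) ·_{c⊥} u ↦ι t{u/x}. -/
inductive RootInter : Tm → Tm → Prop where
  | mk (c : Color) (x : Var) (t u : Tm) :
      RootInter (.app c.flip (.lam c x t) u) (Tm.subst x u t)

/-- Closure of a relation under applicative contexts ⟨·⟩ ·_{d₁} t₁ ⋯ ·_{dₘ} tₘ. -/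
inductive AppClos (R : Tm → Tm → Prop) : Tm → Tm → Prop where
  | root {t u : Tm} : R t u → AppClos R t u
  | app {t u : Tm} (c : Color) (s : Tm) : AppClos R t u → AppClos R (.app c t s) (.app c u s)

/-- Closure of a relation under head contexts λ_{c₁}x₁…λ_{cₙ}xₙ.⟨·⟩ ·_{d₁} t₁ ⋯ ·_{dₘ} tₘ. -/
inductive HeadClos (R : Tm → Tm → Prop) : Tm → Tm → Prop where
  | base {t u : Tm} : AppClos R t u → HeadClos R t u
  | lam {t u : Tm} (c : Color) (x : Var) : HeadClos R t u → HeadClos R (.lam c x t) (.lam c x u)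

/-- Silent head step →hτ. -/
def HStepSilent : Tm → Tm → Prop := HeadClos RootSilent
/-- Interaction head step →hι. -/
def HStepInter : Tm → Tm → Prop := HeadClos RootInter
/-- Checkers head step →hch = →hτ ∪ →hι. -/
def HStep (t u : Tm) : Prop := HStepSilent t u ∨ HStepInter t u

/-- t ⇓ι^k : the head-reduction sequence from t reaches a →hch-normal form
and contains exactly k interaction steps. -/
inductive Evals : Tm → ℕ → Prop where
  | nf {t : Tm} : (∀ u, ¬ HStep t u) → Evals t 0
  | silent {t u : Tm} {k : ℕ} : HStepSilent t u → Evals u k → Evals t k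
  | inter {t u : Tm} {k : ℕ} : HStepInter t u → Evals u k → Evals t (k + 1)

/-- Linear types: atoms and colored arrows M →_c L (multi types as lists). -/
inductive LinTy where
  | atom : ℕ → LinTy
  | arr : List LinTy → Color → LinTy → LinTy

/-- Multi types: finite multisets [L₁,…,Lₙ] of linear types (represented as lists). -/
abbrev MTy := List LinTy

/-- Either a linear type or a multi type. -/
inductive GTy where
  | lin : LinTy → GTy
  | multi : MTy → GTy

/-- Type environments. -/
abbrev Env := Var → MTy

/-- Pointwise (multiset) union Γ ⊎ Δ of environments. -/
def Env.union (Γ Δ : Env) : Env := fun x => Γ x ++ Δ x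
/-- The empty environment. -/
def Env.empty : Env := fun _ => []
/-- The environment x : M. -/
def Env.single (x : Var) (M : MTy) : Env := fun y => if y = x then M else []
/-- Environment update: (Γ, x:M) when Γ x is empty. -/
def Env.update (Γ : Env) (x : Var) (M : MTy) : Env := fun y => if y = x then M else Γ y

/-- Dual Kronecker delta δ̄(c,d): 0 if the colors agree, 1 otherwise. -/
def costOf (c d : Color) : ℕ := if c = d then 0 else 1

/-- Typing judgments Γ ⊢ₖ t : T of the checkers multi type system,
additionally indexed by the applicative size (number of @ rules) of the derivation. -/
inductive Ty : Env → ℕ → Tm → GTy → ℕ → Prop where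
  | ax (x : Var) (L : LinTy) :
      Ty (Env.single x [L]) 0 (.var x) (.lin L) 0
  | many_nil (t : Tm) :
      Ty Env.empty 0 t (.multi []) 0
  | many_cons {Γ Δ : Env} {k k' : ℕ} {t : Tm} {L : LinTy} {M : MTy} {s s' : ℕ} :
      Ty Γ k t (.lin L) s → Ty Δ k' t (.multi M) s' →
      Ty (Env.union Γ Δ) (k + k') t (.multi (L :: M)) (s + s')
  | lam {Γ : Env} {k : ℕ} {t : Tm} {L : LinTy} {s : ℕ} (c : Color) (x : Var) :
      Ty Γ k t (.lin L) s →
      Ty (Env.update Γ x []) k (.lam c x t) (.lin (.arr (Γ x) c L)) s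
  | app {Γ Δ : Env} {k₁ k₂ : ℕ} {t u : Tm} {M : MTy} {c : Color} {L : LinTy} {s₁ s₂ : ℕ}
      (d : Color) :
      Ty Γ k₁ t (.lin (.arr M c L)) s₁ → Ty Δ k₂ u (.multi M) s₂ →
      Ty (Env.union Γ Δ) (k₁ + k₂ + costOf c d) (.app d t u) (.lin L) (s₁ + s₂ + 1)

/-- Γ ⊢ₖ t : T is derivable (for some derivation/size). -/
def HasTy (Γ : Env) (k : ℕ) (t : Tm) (T : GTy) : Prop := ∃ s, Ty Γ k t T s

/-- Polarities. -/
inductive Pol where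
  | pos
  | neg
deriving DecidableEq

/-- The opposite polarity. -/
def Pol.flip : Pol → Pol
  | .pos => .neg
  | .neg => .pos

mutual
  /-- Polarized whitening on linear types: `WhiterL p k L' L` means L' ⊑^p_k L. -/
  inductive WhiterL : Pol → ℕ → LinTy → LinTy → Prop where
    | atom (p : Pol) (a : ℕ) : WhiterL p 0 (.atom a) (.atom a)
    | whiten {k₁ k₂ : ℕ} {M' M : List LinTy} {L' L : LinTy} :
        WhiterM .neg k₁ M' M → WhiterL .pos k₂ L' L →
        WhiterL .pos (k₁ + k₂ + 1) (.arr M' .white L') (.arr M .black L)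
    | congr {p : Pol} {k₁ k₂ : ℕ} {M' M : List LinTy} {L' L : LinTy} (c : Color) :
        WhiterM p.flip k₁ M' M → WhiterL p k₂ L' L →
        WhiterL p (k₁ + k₂) (.arr M' c L') (.arr M c L)

  /-- Polarized whitening on multi types (componentwise, summing the costs). -/
  inductive WhiterM : Pol → ℕ → List LinTy → List LinTy → Prop where
    | nil (p : Pol) : WhiterM p 0 [] []
    | cons {p : Pol} {k k' : ℕ} {L' L : LinTy} {M' M : List LinTy} :
        WhiterL p k L' L → WhiterM p k' M' M →
        WhiterM p (k + k') (L' :: M') (L :: M)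
end

/-- Polarized whitening on environments (pointwise, with finitely many nonzero costs). -/
def WhiterE (p : Pol) (k : ℕ) (Γ' Γ : Env) : Prop :=
  ∃ f : Var →₀ ℕ, (∀ x, WhiterM p (f x) (Γ' x) (Γ x)) ∧ k = f.sum fun _ n => n

/-- Polarized whitening on pairs: (Γ',L') ⊑^p_k (Γ,L) iff Γ' ⊑^{p°}_{k₁} Γ and L' ⊑^p_{k₂} L
with k = k₁ + k₂. -/
def WhiterP (p : Pol) (k : ℕ) (Γ' : Env) (L' : LinTy) (Γ : Env) (L : LinTy) : Prop :=
  ∃ k₁ k₂, k = k₁ + k₂ ∧ WhiterE p.flip k₁ Γ' Γ ∧ WhiterL p k₂ L' L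

/-- Ordinary λ-terms. -/
inductive LTm where
  | var : Var → LTm
  | lam : Var → LTm → LTm
  | app : LTm → LTm → LTm

/-- Substitution on λ-terms. -/
def LTm.subst (x : Var) (u : LTm) : LTm → LTm
  | .var y => if y = x then u else .var y
  | .lam y t => if y = x then .lam y t else .lam y (LTm.subst x u t)
  | .app t s => .app (LTm.subst x u t) (LTm.subst x u s)

/-- Root β-step. -/
inductive LRoot : LTm → LTm → Prop where
  | mk (x : Var) (t u : LTm) : LRoot (.app (.lam x t) u) (LTm.subst x u t)

inductive LAppClos (R : LTm → LTm → Prop) : LTm → LTm → Prop where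
  | root {t u : LTm} : R t u → LAppClos R t u
  | app {t u : LTm} (s : LTm) : LAppClos R t u → LAppClos R (.app t s) (.app u s)

inductive LHeadClos (R : LTm → LTm → Prop) : LTm → LTm → Prop where
  | base {t u : LTm} : LAppClos R t u → LHeadClos R t u
  | lam {t u : LTm} (x : Var) : LHeadClos R t u → LHeadClos R (.lam x t) (.lam x u)

/-- Head β-reduction step on λ-terms. -/
def LHStep : LTm → LTm → Prop := LHeadClos LRoot
/-- Head normal forms. -/
def LIsHnf (t : LTm) : Prop := ∀ u, ¬ LHStep t u
/-- Many-step head reduction. -/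
def HeadReduces (t h : LTm) : Prop := Relation.ReflTransGen LHStep t h
/-- t has a head normal form. -/
def HasHnf (t : LTm) : Prop := ∃ h, HeadReduces t h ∧ LIsHnf h

/-- λx₁…xₙ.t -/
def lams : List Var → LTm → LTm
  | [], t => t
  | x :: xs, t => .lam x (lams xs t)

/-- t u₁ ⋯ uₖ -/
def apps : LTm → List LTm → LTm
  | t, [] => t
  | t, u :: us => apps (.app t u) us

/-- x occurs free in t. -/
def LFree (x : Var) : LTm → Prop
  | .var y => y = x
  | .lam y t => y ≠ x ∧ LFree x t
  | .app t u => LFree x t ∨ LFree x u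

/-- The (Hη_red) clause: t head-reduces to λx₁…x_{n+p}. y t₁…t_{k+p},
u head-reduces to λx₁…xₙ. y u₁…u_k, with R tᵢ uᵢ (i ≤ k), R t_{k+i} x_{n+i},
and the extra abstracted variables fresh for y u₁…u_k. -/
def HEtaL (R : LTm → LTm → Prop) (t u : LTm) : Prop :=
  ∃ (xs zs : List Var) (y : Var) (ts ts' us : List LTm),
    HeadReduces t (lams (xs ++ zs) (apps (.var y) (ts ++ ts'))) ∧
    HeadReduces u (lams xs (apps (.var y) us)) ∧
    List.Forall₂ R ts us ∧
    List.Forall₂ (fun a z => R a (.var z)) ts' zs ∧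
    (∀ z ∈ zs, ¬ LFree z (apps (.var y) us))

/-- The clause symmetric to (Hη_red), allowing η-expansions on the u side. -/
def HEtaR (R : LTm → LTm → Prop) (t u : LTm) : Prop :=
  ∃ (xs zs : List Var) (y : Var) (ts us us' : List LTm),
    HeadReduces t (lams xs (apps (.var y) ts)) ∧
    HeadReduces u (lams (xs ++ zs) (apps (.var y) (us ++ us'))) ∧
    List.Forall₂ R ts us ∧
    List.Forall₂ (fun z a => R (.var z) a) zs us' ∧
    (∀ z ∈ zs, ¬ LFree z (apps (.var y) ts))

/-- The Böhm preorder up to η-reductions ⊑η↓: the largest relation closed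
under (bot) and (Hη_red), defined as a greatest fixed point. -/
def EtaRedLe (t u : LTm) : Prop :=
  ∃ R : LTm → LTm → Prop,
    (∀ a b, R a b → (¬ HasHnf a) ∨ HEtaL R a b) ∧ R t u

/-- The Böhm preorder up to possibly infinite η-conversion ⊑Bη: the largest
relation closed under (bot), (Hη_red) and its symmetric clause. -/
def BohmEtaLe (t u : LTm) : Prop :=
  ∃ R : LTm → LTm → Prop,
    (∀ a b, R a b → (¬ HasHnf a) ∨ HEtaL R a b ∨ HEtaR R a b) ∧ R t u

/-- The c-painting of an ordinary λ-term. -/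
def paint (c : Color) : LTm → Tm
  | .var x => .var x
  | .lam x t => .lam c x (paint c t)
  | .app t u => .app c (paint c t) (paint c u)

/-- λ-calculus contexts. -/
inductive LCtx where
  | hole : LCtx
  | lam : Var → LCtx → LCtx
  | appL : LCtx → LTm → LCtx
  | appR : LTm → LCtx → LCtx

/-- Paint a λ-calculus context with color c (hole unchanged) and fill its hole
with a checkers term. -/
def LCtx.paintFill (c : Color) : LCtx → Tm → Tm
  | .hole, s => s
  | .lam x C, s => .lam c x (C.paintFill c s)
  | .appL C u, s => .app c (C.paintFill c s) (paint c u)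
  | .appR t C, s => .app c (paint c t) (C.paintFill c s)

/-- Checkers contexts. -/
inductive Ctx where
  | hole : Ctx
  | lam : Color → Var → Ctx → Ctx
  | appL : Color → Ctx → Tm → Ctx
  | appR : Color → Tm → Ctx → Ctx

/-- Filling the hole of a checkers context (possibly capturing free variables). -/
def Ctx.fill : Ctx → Tm → Tm
  | .hole, s => s
  | .lam c x C, s => .lam c x (C.fill s)
  | .appL c C u, s => .app c (C.fill s) u
  | .appR c t C, s => .app c t (C.fill s)

/-- Interaction improvement ⊑imp on checkers terms. -/
def Imp (t u : Tm) : Prop :=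
  ∀ (C : Ctx) (k : ℕ), Evals (C.fill t) k → ∃ k' ≤ k, Evals (C.fill u) k'

/-- Polarized whiter-cheaper improvement ⊑pwc on checkers terms. -/
def PWC (t u : Tm) : Prop :=
  ∀ (Γ : Env) (L : LinTy) (k : ℕ), HasTy Γ k t (.lin L) →
    ∃ (Γ' : Env) (L' : LinTy) (k' d : ℕ),
      HasTy Γ' k' u (.lin L') ∧ WhiterP .pos d Γ' L' Γ L ∧ k' + d ≤ k

/-! ### Whitening of types -/

mutual
  /-- The number of black arrows in a linear type; `costOf c .white` is `1` exactly when `c` is black. -/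
  def LinTy.blacks : LinTy → ℕ
    | .atom _ => 0
    | .arr M c L => MTy.blacks M + costOf c .white + LinTy.blacks L
  /-- The number of black arrows in a multi type. -/
  def MTy.blacks : List LinTy → ℕ
    | [] => 0
    | L :: M => LinTy.blacks L + MTy.blacks M
end

mutual
  theorem WhiterL.refl (p : Pol) : (L : LinTy) → WhiterL p 0 L L
    | .atom a => .atom p a
    | .arr M c L => .congr c (WhiterM.refl p.flip M) (WhiterL.refl p L)
  theorem WhiterM.refl (p : Pol) : (M : List LinTy) → WhiterM p 0 M M
    | [] => .nil p
    | L :: M => .cons (WhiterL.refl p L) (WhiterM.refl p M)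
end

mutual
  /-- The cost of a whitening is the number of black arrows it removes. -/
  theorem WhiterL.blacks {p : Pol} {k : ℕ} {L' L : LinTy} :
      WhiterL p k L' L → L'.blacks + k = L.blacks
    | .atom p a => by simp [LinTy.blacks]
    | .whiten h1 h2 => by
        have e1 := WhiterM.blacks h1
        have e2 := WhiterL.blacks h2
        simp [LinTy.blacks, costOf]; omega
    | .congr c h1 h2 => by
        have e1 := WhiterM.blacks h1
        have e2 := WhiterL.blacks h2
        simp only [LinTy.blacks]; omega
  theorem WhiterM.blacks {p : Pol} {k : ℕ} {M' M : List LinTy} :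
      WhiterM p k M' M → MTy.blacks M' + k = MTy.blacks M
    | .nil p => by simp [MTy.blacks]
    | .cons h1 h2 => by
        have e1 := WhiterL.blacks h1
        have e2 := WhiterM.blacks h2
        simp only [MTy.blacks]; omega
end

mutual
  theorem WhiterL.eq_of_cost {p : Pol} {k : ℕ} {L' L : LinTy} :
      WhiterL p k L' L → k = 0 → L' = L
    | .atom p a, _ => rfl
    | .whiten h1 h2, h => by omega
    | .congr c h1 h2, h => by
        rw [WhiterM.eq_of_cost h1 (by omega), WhiterL.eq_of_cost h2 (by omega)]
  theorem WhiterM.eq_of_cost {p : Pol} {k : ℕ} {M' M : List LinTy} :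
      WhiterM p k M' M → k = 0 → M' = M
    | .nil p, _ => rfl
    | .cons h1 h2, h => by
        rw [WhiterL.eq_of_cost h1 (by omega), WhiterM.eq_of_cost h2 (by omega)]
end

theorem WhiterM.append {p : Pol} {k₁ : ℕ} {A' A : List LinTy} (h : WhiterM p k₁ A' A) :
    ∀ {k₂ : ℕ} {B' B : List LinTy}, WhiterM p k₂ B' B →
      WhiterM p (k₁ + k₂) (A' ++ B') (A ++ B) := by
  induction A generalizing A' k₁ with
  | nil => intro k₂ B' B hB; cases h; simpa using hB
  | cons L A ih =>
    intro k₂ B' B hB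
    cases h with
    | cons h1 h2 =>
      have := WhiterM.cons h1 (ih h2 hB)
      rw [← add_assoc] at this
      exact this

theorem WhiterM.append_inv {p : Pol} (A B : List LinTy) {k : ℕ} {C : List LinTy}
    (h : WhiterM p k C (A ++ B)) :
    ∃ k₁ k₂ A' B', k = k₁ + k₂ ∧ C = A' ++ B' ∧ WhiterM p k₁ A' A ∧ WhiterM p k₂ B' B := by
  induction A generalizing C k with
  | nil => exact ⟨0, k, [], C, by simp, rfl, .nil p, h⟩
  | cons L A ih =>
    cases h with
    | @cons _ j _ L' _ _ _ h1 h2 =>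
      obtain ⟨k₁, k₂, A', B', rfl, rfl, hA, hB⟩ := ih h2
      exact ⟨j + k₁, k₂, L' :: A', B', by omega, rfl, .cons h1 hA, hB⟩

/-! ### Whitening of environments -/

theorem WhiterE.refl (p : Pol) (Γ : Env) : WhiterE p 0 Γ Γ :=
  ⟨0, fun x => WhiterM.refl p (Γ x), by simp⟩

theorem WhiterE.eq {p : Pol} {Γ' Γ : Env} (h : WhiterE p 0 Γ' Γ) : Γ' = Γ := by
  obtain ⟨f, hf, h0⟩ := h
  have hz : ∀ x, f x = 0 := by
    intro x
    by_contra hx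
    have := (Finset.sum_eq_zero_iff.mp h0.symm) x (Finsupp.mem_support_iff.mpr hx)
    exact hx this
  funext x
  exact (hf x).eq_of_cost (hz x)

theorem WhiterE.union {p : Pol} {k₁ k₂ : ℕ} {Γ' Γ Δ' Δ : Env}
    (h₁ : WhiterE p k₁ Γ' Γ) (h₂ : WhiterE p k₂ Δ' Δ) :
    WhiterE p (k₁ + k₂) (Γ'.union Δ') (Γ.union Δ) := by
  obtain ⟨f, hf, rfl⟩ := h₁
  obtain ⟨g, hg, rfl⟩ := h₂
  refine ⟨f + g, fun x => (hf x).append (hg x), ?_⟩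
  rw [Finsupp.sum_add_index'] <;> simp

theorem WhiterE.union_inv {p : Pol} {k : ℕ} {Θ Γ Δ : Env} (h : WhiterE p k Θ (Γ.union Δ)) :
    ∃ k₁ k₂ Γ' Δ', k = k₁ + k₂ ∧ Θ = Env.union Γ' Δ' ∧
      WhiterE p k₁ Γ' Γ ∧ WhiterE p k₂ Δ' Δ := by
  obtain ⟨f, hf, rfl⟩ := h
  choose f₁ f₂ A B hs hC hA hB using fun x => WhiterM.append_inv (Γ x) (Δ x) (hf x)
  let g₁ : Var →₀ ℕ := Finsupp.onFinset f.support f₁ (by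
    intro x hx; rw [Finsupp.mem_support_iff, hs]; omega)
  let g₂ : Var →₀ ℕ := Finsupp.onFinset f.support f₂ (by
    intro x hx; rw [Finsupp.mem_support_iff, hs]; omega)
  have hg : f = g₁ + g₂ := by ext x; exact hs x
  refine ⟨_, _, A, B, ?_, funext hC, ⟨g₁, hA, rfl⟩, ⟨g₂, hB, rfl⟩⟩
  rw [hg, Finsupp.sum_add_index'] <;> simp

theorem WhiterE.single {p : Pol} {k : ℕ} (x : Var) {M' M : MTy} (h : WhiterM p k M' M) :
    WhiterE p k (Env.single x M') (Env.single x M) := by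
  refine ⟨Finsupp.single x k, fun y => ?_, by simp⟩
  by_cases hy : y = x
  · subst hy; simpa [Env.single] using h
  · simpa [Env.single, hy, Finsupp.single_apply, Ne.symm hy] using WhiterM.nil p

theorem WhiterE.update {p : Pol} {k j : ℕ} {x : Var} {Γ' Γ : Env} {M' M : MTy}
    (h : WhiterE p k Γ' (Γ.update x [])) (hM : WhiterM p j M' M) :
    WhiterE p (k + j) (Γ'.update x M') (Γ.update x M) := by
  obtain ⟨f, hf, rfl⟩ := h
  have hx : f x = 0 := by
    have := hf x
    simp only [Env.update, if_true] at this
    generalize f x = n at this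
    generalize Γ' x = N at this
    cases this; rfl
  refine ⟨f + Finsupp.single x j, fun y => ?_, ?_⟩
  · by_cases hy : y = x
    · subst hy; simpa [Env.update, hx] using hM
    · have := hf y
      simpa [Env.update, hy, Finsupp.single_apply, Ne.symm hy] using this
  · rw [Finsupp.sum_add_index'] <;> simp

theorem WhiterE.erase {p : Pol} {k : ℕ} (x : Var) {Γ' Γ : Env} (h : WhiterE p k Γ' Γ) :
    ∃ i j, k = i + j ∧ WhiterE p i (Γ'.update x []) (Γ.update x []) ∧
      WhiterM p j (Γ' x) (Γ x) := by
  obtain ⟨f, hf, rfl⟩ := h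
  refine ⟨(f.erase x).sum fun _ n => n, f x, ?_, ⟨f.erase x, fun y => ?_, rfl⟩, hf x⟩
  · conv_lhs => rw [← Finsupp.erase_add_single x f]
    rw [Finsupp.sum_add_index'] <;> simp
  · by_cases hy : y = x
    · subst hy; simpa [Env.update] using WhiterM.nil p
    · simpa [Env.update, hy] using hf y

theorem WhiterE.at_nil {p : Pol} {k : ℕ} {x : Var} {Γ' Γ : Env} (h : WhiterE p k Γ' Γ)
    (hx : Γ x = []) : Γ' x = [] := by
  obtain ⟨f, hf, -⟩ := h
  have := hf x
  rw [hx] at this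
  generalize f x = n at this
  generalize Γ' x = N at this
  cases this; rfl

theorem Env.update_eq_self {Γ : Env} {x : Var} {M : MTy} (h : Γ x = M) : Γ.update x M = Γ := by
  funext y
  by_cases hy : y = x
  · subst hy; simp [Env.update, h]
  · simp [Env.update, hy]

theorem Env.update_update (Γ : Env) (x : Var) (M N : MTy) :
    (Γ.update x M).update x N = Γ.update x N := by
  funext y
  by_cases hy : y = x <;> simp [Env.update, hy]

theorem WhiterE.single_inv {p : Pol} {k : ℕ} {x : Var} {Γ' : Env} {M : MTy}
    (h : WhiterE p k Γ' (Env.single x M)) :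
    ∃ M', Γ' = Env.single x M' ∧ WhiterM p k M' M := by
  obtain ⟨i, j, rfl, hE, hM⟩ := h.erase x
  have e : ∀ N, (Env.single x N).update x [] = Env.empty := by
    intro N; funext y; by_cases hy : y = x <;> simp [Env.update, Env.single, Env.empty, hy]
  have hi : i = 0 := by
    obtain ⟨f, hf, rfl⟩ := hE
    refine Finset.sum_eq_zero fun y _ => ?_
    have := hf y
    rw [e, Env.empty] at this
    generalize f y = n at this ⊢
    generalize (Γ'.update x []) y = N at this
    cases this; rfl
  subst hi
  refine ⟨Γ' x, ?_, by simpa [Env.single] using hM⟩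
  have hΓ := hE.eq
  rw [e] at hΓ
  funext y
  by_cases hy : y = x
  · subst hy; simp [Env.single]
  · have := congrFun hΓ y
    simpa [Env.update, Env.single, Env.empty, hy] using this

/-! ### Challenges and answers -/

/-- Polarized whitening of general types; a linear type is never comparable with a multi type. -/
def WhiterG (p : Pol) (k : ℕ) : GTy → GTy → Prop
  | .lin L', .lin L => WhiterL p k L' L
  | .multi M', .multi M => WhiterM p k M' M
  | _, _ => False

theorem WhiterG.refl (p : Pol) (T : GTy) : WhiterG p 0 T T := by
  cases T
  · exact WhiterL.refl p _
  · exact WhiterM.refl p _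

/-- The possible answers of `t` to a challenge `(Γ', T')` coming from a typing of cost `k`: a
derivation of the same cost whose conclusion is whitened in a positive position of the environment
(first case) or of the type (second case), or a derivation of the challenge itself whose cost differs
by one. -/
inductive Answer (t : Tm) (Γ' : Env) (T' : GTy) (k : ℕ) : Prop where
  | env {Γ'' : Env} : HasTy Γ'' k t T' → WhiterE .neg 1 Γ'' Γ' → Answer t Γ' T' k
  | type {T'' : GTy} : HasTy Γ' k t T'' → WhiterG .pos 1 T'' T' → Answer t Γ' T' k
  | cost {k' : ℕ} : HasTy Γ' k' t T' → (k' = k + 1 ∨ k = k' + 1) → Answer t Γ' T' k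

/-- `t` answers every challenge on its linear typings. The costs `i` and `j` are those of the
challenge in the environment and in the type. -/
def Repaint (t : Tm) : Prop :=
  ∀ (Γ Γ' : Env) (L L' : LinTy) (k i j : ℕ), HasTy Γ k t (.lin L) → i + j = 1 →
    WhiterE .pos i Γ' Γ → WhiterL .neg j L' L → Answer t Γ' (.lin L') k

theorem HasTy.cons {Γ Δ : Env} {k k' : ℕ} {t : Tm} {L : LinTy} {M : MTy}
    (h : HasTy Γ k t (.lin L)) (h' : HasTy Δ k' t (.multi M)) :
    HasTy (Γ.union Δ) (k + k') t (.multi (L :: M)) := by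
  obtain ⟨s, h⟩ := h
  obtain ⟨s', h'⟩ := h'
  exact ⟨_, .many_cons h h'⟩

theorem HasTy.app {Γ Δ : Env} {k k' : ℕ} {t u : Tm} {M : MTy} {c : Color} {L : LinTy} (d : Color)
    (h : HasTy Γ k t (.lin (.arr M c L))) (h' : HasTy Δ k' u (.multi M)) :
    HasTy (Γ.union Δ) (k + k' + costOf c d) (.app d t u) (.lin L) := by
  obtain ⟨s, h⟩ := h
  obtain ⟨s', h'⟩ := h'
  exact ⟨_, .app d h h'⟩

theorem HasTy.lam {Γ : Env} {k : ℕ} {t : Tm} {L : LinTy} (c : Color) (x : Var)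
    (h : HasTy Γ k t (.lin L)) :
    HasTy (Γ.update x []) k (.lam c x t) (.lin (.arr (Γ x) c L)) := by
  obtain ⟨s, h⟩ := h
  exact ⟨_, .lam c x h⟩

/-- Multi typings are repainted one component at a time. -/
theorem Repaint.multi {t : Tm} (ht : Repaint t) (M : MTy) :
    ∀ (Γ Γ' : Env) (M' : MTy) (k i j : ℕ), HasTy Γ k t (.multi M) → i + j = 1 →
      WhiterE .pos i Γ' Γ → WhiterM .neg j M' M → Answer t Γ' (.multi M') k := by
  induction M with
  | nil =>
    intro Γ Γ' M' k i j hty hij hE hM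
    obtain ⟨s, hty⟩ := hty
    cases hM
    obtain rfl : i = 1 := by omega
    cases hty
    obtain ⟨f, hf, hs⟩ := hE
    have : f.sum (fun _ n => n) = 0 := by
      refine Finset.sum_eq_zero fun y _ => ?_
      have := hf y
      rw [Env.empty] at this
      generalize f y = n at this ⊢
      generalize Γ' y = N at this
      cases this; rfl
    omega
  | cons L M ih =>
    intro Γ Γ' M' k i j hty hij hE hM
    obtain ⟨s, hty⟩ := hty
    cases hty with
    | @many_cons Γ₁ Δ₁ k₁ k₂ _ _ _ s₁ s₂ h₁ h₂ =>
    have h₁ : HasTy _ _ _ _ := ⟨_, h₁⟩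
    have h₂ : HasTy _ _ _ _ := ⟨_, h₂⟩
    obtain ⟨i₁, i₂, Γ₁', Δ₁', rfl, rfl, hE₁, hE₂⟩ := hE.union_inv
    cases hM with
    | @cons _ j₁ j₂ L' _ M' _ hL hM =>
    rcases Nat.eq_zero_or_pos (i₁ + j₁) with h0 | h0
    · obtain rfl : i₁ = 0 := by omega
      obtain rfl : j₁ = 0 := by omega
      obtain rfl := hE₁.eq
      obtain rfl := hL.eq_of_cost rfl
      cases ih _ _ _ _ i₂ j₂ h₂ (by omega) hE₂ hM with
      | env h w =>
        exact .env (h₁.cons h) (by simpa using (WhiterE.refl .neg Γ₁').union w)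
      | @type T'' h w =>
        cases T'' with
        | lin => exact w.elim
        | multi N =>
          refine .type (h₁.cons h) ?_
          have := WhiterM.cons (WhiterL.refl .pos L') (show WhiterM .pos 1 N M' from w)
          simpa [WhiterG] using this
      | cost h e => exact .cost (h₁.cons h) (by omega)
    · obtain rfl : i₂ = 0 := by omega
      obtain rfl : j₂ = 0 := by omega
      obtain rfl := hE₂.eq
      obtain rfl := hM.eq_of_cost rfl
      cases ht _ _ _ _ _ i₁ j₁ h₁ (by omega) hE₁ hL with
      | env h w =>
        exact .env (h.cons h₂) (by simpa using w.union (WhiterE.refl .neg Δ₁'))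
      | @type T'' h w =>
        cases T'' with
        | multi => exact w.elim
        | lin N =>
          refine .type (h.cons h₂) ?_
          have := WhiterM.cons (show WhiterL .pos 1 N L' from w) (WhiterM.refl .pos M')
          simpa [WhiterG] using this
      | cost h e => exact .cost (h.cons h₂) (by omega)

/-! ### The cases of the induction -/

theorem repaint_var (x : Var) : Repaint (.var x) := by
  intro Γ Γ' L L' k i j hty hij hE hL
  obtain ⟨s, hty⟩ := hty
  cases hty
  obtain ⟨M', rfl, hM⟩ := hE.single_inv
  cases hM with
  | @cons _ a b L₁ _ _ _ hL₁ hN =>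
  cases hN
  rcases Nat.eq_zero_or_pos j with rfl | hj
  · -- the challenge is in the environment: whiten the type in the same way
    obtain rfl := hL.eq_of_cost rfl
    obtain rfl : a = 1 := by omega
    exact .type (T'' := .lin L₁) ⟨_, .ax x L₁⟩ hL₁
  · -- the challenge is in the type: whiten the environment in the same way
    obtain rfl : a = 0 := by omega
    obtain rfl : j = 1 := by omega
    obtain rfl := hL₁.eq_of_cost rfl
    exact .env ⟨_, .ax x L'⟩ (.single x (.cons hL (.nil _)))

theorem repaint_lam (c : Color) (x : Var) {t : Tm} (ht : Repaint t) : Repaint (.lam c x t) := by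
  intro Γ Γ' L L' k i j hty hij hE hL
  obtain ⟨s, hty⟩ := hty
  cases hty with
  | @lam Γ₀ _ _ L₀ _ _ _ h₀ =>
  cases hL with
  | @congr _ j₁ j₂ M' _ L₁ _ _ hM hL =>
  have hx : Γ' x = [] := hE.at_nil (by simp [Env.update])
  have hE₁ : WhiterE .pos (i + j₁) (Γ'.update x M') Γ₀ := by
    have := hE.update hM
    rwa [Env.update_eq_self (Γ := Γ₀) rfl] at this
  have hval : (Γ'.update x M') x = M' := by simp [Env.update]
  have hera : (Γ'.update x M').update x [] = Γ' := by
    rw [Env.update_update, Env.update_eq_self hx]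
  cases ht _ _ _ _ _ (i + j₁) j₂ ⟨_, h₀⟩ (by omega) hE₁ hL with
  | @env Γ'' h w =>
    obtain ⟨a, b, hab, wE, wM⟩ := w.erase x
    rw [hera] at wE
    rw [hval] at wM
    have h := h.lam c x
    rcases Nat.eq_zero_or_pos a with rfl | ha
    · obtain rfl : b = 1 := by omega
      rw [wE.eq] at h
      refine .type h ?_
      have := WhiterL.congr (p := .pos) c wM (WhiterL.refl .pos L₁)
      simpa [WhiterG] using this
    · obtain rfl : b = 0 := by omega
      obtain rfl : a = 1 := by omega
      rw [wM.eq_of_cost rfl] at h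
      exact .env h wE
  | @type T'' h w =>
    cases T'' with
    | multi => exact w.elim
    | lin L'' =>
      have h := h.lam c x
      rw [hera, hval] at h
      refine .type h ?_
      have := WhiterL.congr (p := .pos) c (WhiterM.refl .neg M') (show WhiterL .pos 1 L'' L₁ from w)
      simpa [WhiterG] using this
  | @cost k' h e =>
    have h := h.lam c x
    rw [hera, hval] at h
    exact .cost h e

/-- The exchange between the two subterms of an application: `t`, typed with argument type `M`, faces
a challenge whose argument type is `M'`, and `u` is already typed with `M'`. The induction is on
the number of black arrows left in `M'`. -/
theorem app_exchange (d : Color) {t u : Tm} (ht : Repaint t) (hu : Repaint u) (n : ℕ) :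
    ∀ (Γ Γ' Δ : Env) (M M' : MTy) (c : Color) (L L' : LinTy) (k₁ k₂ i j₁ j₂ : ℕ),
      MTy.blacks M' ≤ n → HasTy Γ k₁ t (.lin (.arr M c L)) → HasTy Δ k₂ u (.multi M') →
      i + (j₁ + j₂) = 1 → WhiterE .pos i Γ' Γ → WhiterM .pos j₁ M' M → WhiterL .neg j₂ L' L →
      Answer (.app d t u) (Γ'.union Δ) (.lin L') (k₁ + k₂ + costOf c d) := by
  induction n using Nat.strong_induction_on with
  | _ n ih =>
  intro Γ Γ' Δ M M' c L L' k₁ k₂ i j₁ j₂ hn h₁ h₂ hij hE hM hL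
  cases ht _ _ _ _ _ i (j₁ + j₂) h₁ hij hE (WhiterL.congr (p := .neg) c hM hL) with
  | env h w => exact .env (h.app d h₂) (by simpa using w.union (WhiterE.refl .neg Δ))
  | cost h e => exact .cost (h.app d h₂) (by omega)
  | @type T'' h w =>
    cases T'' with
    | multi => exact w.elim
    | lin T =>
    have w : WhiterL .pos 1 T (.arr M' c L') := w
    generalize hone : 1 = one at w
    cases w with
    | @whiten a b M'' _ L'' _ wM wL =>
      obtain rfl : a = 0 := by omega
      obtain rfl : b = 0 := by omega
      obtain rfl := wM.eq_of_cost rfl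
      obtain rfl := wL.eq_of_cost rfl
      refine .cost (h.app d h₂) ?_
      cases d <;> simp [costOf]
    | @congr _ a b M'' _ L'' _ _ wM wL =>
      have wM : WhiterM .neg a M'' M' := wM
      rcases Nat.eq_zero_or_pos a with rfl | ha
      · obtain rfl : b = 1 := by omega
        obtain rfl := wM.eq_of_cost rfl
        exact .type (h.app d h₂) wL
      · obtain rfl : a = 1 := by omega
        obtain rfl : b = 0 := by omega
        obtain rfl := wL.eq_of_cost rfl
        -- the answer of `t` is a challenge for `u`
        cases hu.multi _ _ _ _ _ 0 1 h₂ rfl (WhiterE.refl .pos Δ) wM with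
        | env h' w => exact .env (h.app d h') (by simpa using (WhiterE.refl .neg Γ').union w)
        | cost h' e => exact .cost (h.app d h') (by omega)
        | @type T₃ h' w' =>
          cases T₃ with
          | lin => exact w'.elim
          | multi M₃ =>
          have w' : WhiterM .pos 1 M₃ M'' := w'
          have e₁ := wM.blacks
          have e₂ := w'.blacks
          exact ih (MTy.blacks M₃) (by omega) _ _ _ _ _ _ _ _ _ _ 0 1 0 le_rfl h h' rfl
            (WhiterE.refl .pos Γ') w' (WhiterL.refl .neg _)

theorem repaint_app (d : Color) {t u : Tm} (ht : Repaint t) (hu : Repaint u) :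
    Repaint (.app d t u) := by
  intro Γ Γ' L L' k i j hty hij hE hL
  obtain ⟨s, hty⟩ := hty
  cases hty with
  | @app Γ₁ Δ k₁ k₂ _ _ M c _ s₁ s₂ _ h₁ h₂ =>
  have h₁ : HasTy _ _ _ _ := ⟨_, h₁⟩
  have h₂ : HasTy _ _ _ _ := ⟨_, h₂⟩
  obtain ⟨i₁, i₂, Γ₁', Δ', rfl, rfl, hE₁, hE₂⟩ := hE.union_inv
  rcases Nat.eq_zero_or_pos i₂ with rfl | hi
  · obtain rfl := hE₂.eq
    exact app_exchange d ht hu _ _ _ _ _ _ _ _ _ _ _ i₁ 0 j le_rfl h₁ h₂ (by omega) hE₁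
      (WhiterM.refl .pos M) hL
  · obtain rfl : i₁ = 0 := by omega
    obtain rfl : i₂ = 1 := by omega
    obtain rfl : j = 0 := by omega
    obtain rfl := hE₁.eq
    obtain rfl := hL.eq_of_cost rfl
    cases hu.multi _ _ _ _ _ 1 0 h₂ rfl hE₂ (WhiterM.refl .neg M) with
    | env h w => exact .env (h₁.app d h) (by simpa using (WhiterE.refl .neg Γ₁').union w)
    | cost h e => exact .cost (h₁.app d h) (by omega)
    | @type T'' h w =>
      cases T'' with
      | lin => exact w.elim
      | multi M'' =>
      exact app_exchange d ht hu _ _ _ _ _ _ _ _ _ _ _ 0 1 0 le_rfl h₁ h rfl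
        (WhiterE.refl .pos Γ₁') w (WhiterL.refl .neg _)

theorem repaint_all (t : Tm) : Repaint t := by
  induction t with
  | var x => exact repaint_var x
  | lam c x t ih => exact repaint_lam c x ih
  | app d t u iht ihu => exact repaint_app d iht ihu

/-- Repainting lemma. -/
theorem repainting (t : Tm) (Γ Γ' : Env) (L L' : LinTy) (k : ℕ)
    (hty : HasTy Γ k t (.lin L)) (hw : WhiterP .neg 1 Γ' L' Γ L) :
    ∃ (Γ'' : Env) (L'' : LinTy) (k' : ℕ), HasTy Γ'' k' t (.lin L'') ∧
      ((WhiterP .pos 1 Γ'' L'' Γ' L' ∧ k' = k) ∨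
       (Γ'' = Γ' ∧ L'' = L' ∧ Nat.dist k' k = 1)) := by
  obtain ⟨i, j, hij, hE, hL⟩ := hw
  cases repaint_all t _ _ _ _ _ i j hty hij.symm hE hL with
  | @env Γ'' h w =>
    exact ⟨Γ'', L', k, h, .inl ⟨⟨1, 0, rfl, w, WhiterL.refl .pos L'⟩, rfl⟩⟩
  | @type T'' h w =>
    cases T'' with
    | multi => exact w.elim
    | lin L'' =>
      exact ⟨Γ', L'', k, h, .inl ⟨⟨0, 1, rfl, WhiterE.refl _ Γ', w⟩, rfl⟩⟩
  | @cost k' h e =>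
    exact ⟨Γ', L', k', h, .inr ⟨rfl, rfl, by unfold Nat.dist; omega⟩⟩
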